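/- For every real number x > 0, the integral ∫₀^∞ t⁻² e^{-t² - x²/t²} dt converges and x · ∫₀^∞ t⁻² e^{-t² - x²/t²} dt = (√π / 2) · e^{-2x}. -/

import Mathlib

open MeasureTheory Real Set

/-!
The substitution `u = t - c / t` maps `(0, ∞)` increasingly onto `ℝ` and gives
`∫₀^∞ (1 + c / t²) f (t - c / t) dt = ∫_ℝ f`. The inversion `t ↦ c / t` turns `t - c / t` into its
negative, so for even `f` the two summands `1` and `c / t²` contribute equally: each of them gives
half of `∫_ℝ f` (the Cauchy–Schlömilch transformation). For the Gaussian `f u = e^{-u²}`, completing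
the square, `t² + x² / t² = (t - x / t)² + 2 x`, accounts for the factor `e^{-2x}`.
-/

section SubDiv

variable {c t : ℝ}

lemma hasDerivAt_const_div (c : ℝ) (ht : t ≠ 0) :
    HasDerivAt (fun t : ℝ => c / t) (-(c / t ^ 2)) t := by
  simpa [div_eq_mul_inv] using (hasDerivAt_inv ht).const_mul c

lemma hasDerivAt_sub_div (c : ℝ) (ht : t ≠ 0) :
    HasDerivAt (fun t : ℝ => t - c / t) (1 + c / t ^ 2) t := by
  simpa using! (hasDerivAt_id' t).sub (hasDerivAt_const_div c ht)

lemma antitoneOn_const_div_Ioi (hc : 0 ≤ c) : AntitoneOn (fun t : ℝ => c / t) (Ioi 0) :=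
  fun _ hs _ _ hst => div_le_div_of_nonneg_left hc hs hst

lemma monotoneOn_sub_div_Ioi (hc : 0 ≤ c) : MonotoneOn (fun t : ℝ => t - c / t) (Ioi 0) :=
  fun _ hs _ ht hst => sub_le_sub hst (antitoneOn_const_div_Ioi hc hs ht hst)

lemma image_const_div_Ioi (hc : 0 < c) : (fun t : ℝ => c / t) '' Ioi 0 = Ioi 0 := by
  have maps_to : MapsTo (fun t : ℝ => c / t) (Ioi 0) (Ioi 0) := fun _ ht => div_pos hc ht
  refine maps_to.image_subset.antisymm fun u hu => ⟨c / u, maps_to hu, ?_⟩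
  exact div_div_cancel₀ hc.ne'

lemma image_sub_div_Ioi (hc : 0 < c) : (fun t : ℝ => t - c / t) '' Ioi 0 = univ := by
  refine eq_univ_of_forall fun u => ?_
  -- The positive root of `t ^ 2 - t * u - c = 0`.
  set t := (u + √(u ^ 2 + 4 * c)) / 2 with t_def
  have abs_lt_sqrt : |u| < √(u ^ 2 + 4 * c) := by
    rw [← sqrt_sq_eq_abs]
    exact sqrt_lt_sqrt (sq_nonneg u) (by linarith)
  have t_pos : 0 < t := by linarith [neg_abs_le u]
  have t_root : t ^ 2 - c = t * u := by
    have sq_sqrt_disc := sq_sqrt (show 0 ≤ u ^ 2 + 4 * c by positivity)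
    rw [t_def]
    linear_combination sq_sqrt_disc / 4
  refine ⟨t, t_pos, ?_⟩
  field_simp
  exact t_root

end SubDiv

section CauchySchlomilch

variable {E : Type*} [NormedAddCommGroup E] [NormedSpace ℝ E] {f : ℝ → E} {c : ℝ}

lemma integral_Ioi_div_sq_smul_comp_div (f : ℝ → E) (hc : 0 < c) :
    ∫ t in Ioi (0 : ℝ), (c / t ^ 2) • f (c / t) = ∫ t in Ioi (0 : ℝ), f t := by
  have change_of_variables := integral_image_eq_integral_deriv_smul_of_antitoneOn measurableSet_Ioi
    (fun t ht => (hasDerivAt_const_div c (ne_of_gt ht)).hasDerivWithinAt)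
    (antitoneOn_const_div_Ioi hc.le) f
  simpa only [image_const_div_Ioi hc, neg_neg] using change_of_variables.symm

lemma integral_Ioi_one_add_div_sq_smul_comp_sub_div (f : ℝ → E) (hc : 0 < c) :
    ∫ t in Ioi (0 : ℝ), (1 + c / t ^ 2) • f (t - c / t) = ∫ u, f u := by
  have change_of_variables := integral_image_eq_integral_deriv_smul_of_monotoneOn measurableSet_Ioi
    (fun t ht => (hasDerivAt_sub_div c (ne_of_gt ht)).hasDerivWithinAt)
    (monotoneOn_sub_div_Ioi hc.le) f
  simpa only [image_sub_div_Ioi hc, setIntegral_univ] using change_of_variables.symm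

lemma integrableOn_Ioi_one_add_div_sq_smul_comp_sub_div_iff (f : ℝ → E) (hc : 0 < c) :
    IntegrableOn (fun t => (1 + c / t ^ 2) • f (t - c / t)) (Ioi 0) ↔ Integrable f := by
  have change_of_variables := integrableOn_image_iff_integrableOn_deriv_smul_of_monotoneOn
    measurableSet_Ioi (fun t ht => (hasDerivAt_sub_div c (ne_of_gt ht)).hasDerivWithinAt)
    (monotoneOn_sub_div_Ioi hc.le) f
  simpa only [image_sub_div_Ioi hc, integrableOn_univ] using change_of_variables.symm

lemma integrableOn_Ioi_div_sq_smul_comp_sub_div (hf : Integrable f) (hc : 0 < c) :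
    IntegrableOn (fun t => (c / t ^ 2) • f (t - c / t)) (Ioi 0) := by
  have weight_bound (t : ℝ) : ‖c / (t ^ 2 + c)‖ ≤ 1 := by
    rw [norm_of_nonneg (by positivity)]
    exact div_le_one_of_le₀ (by linarith [sq_nonneg t]) (by positivity)
  have weighted_integrable := Integrable.bdd_smul (φ := fun t => c / (t ^ 2 + c))
    ((integrableOn_Ioi_one_add_div_sq_smul_comp_sub_div_iff f hc).2 hf) 1
    (Measurable.aestronglyMeasurable (by fun_prop)) (.of_forall weight_bound)
  refine (integrableOn_congr_fun (fun t (ht : 0 < t) => ?_) measurableSet_Ioi).1 weighted_integrable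
  have weight_mul : c / (t ^ 2 + c) * (1 + c / t ^ 2) = c / t ^ 2 := by field_simp
  rw [Pi.smul_apply', smul_smul, weight_mul]

lemma integrableOn_Ioi_comp_sub_div (hf : Integrable f) (hc : 0 < c) :
    IntegrableOn (fun t => f (t - c / t)) (Ioi 0) := by
  have difference_integrable :=
    ((integrableOn_Ioi_one_add_div_sq_smul_comp_sub_div_iff f hc).2 hf).sub
      (integrableOn_Ioi_div_sq_smul_comp_sub_div hf hc)
  simpa [IntegrableOn, add_smul, Pi.sub_def] using difference_integrable

lemma integral_Ioi_div_sq_smul_comp_sub_div_of_even (hf_even : f.Even) (hc : 0 < c) :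
    ∫ t in Ioi (0 : ℝ), (c / t ^ 2) • f (t - c / t) = ∫ t in Ioi (0 : ℝ), f (t - c / t) := by
  rw [← integral_Ioi_div_sq_smul_comp_div (fun t => f (t - c / t)) hc]
  refine setIntegral_congr_fun measurableSet_Ioi fun t _ => ?_
  simp only [div_div_cancel₀ hc.ne']
  rw [← neg_sub t, hf_even]

theorem two_smul_integral_Ioi_div_sq_smul_comp_sub_div_of_even (hf : Integrable f)
    (hf_even : f.Even) (hc : 0 < c) :
    (2 : ℝ) • ∫ t in Ioi (0 : ℝ), (c / t ^ 2) • f (t - c / t) = ∫ u, f u := by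
  calc (2 : ℝ) • ∫ t in Ioi (0 : ℝ), (c / t ^ 2) • f (t - c / t)
      = (∫ t in Ioi (0 : ℝ), f (t - c / t)) + ∫ t in Ioi (0 : ℝ), (c / t ^ 2) • f (t - c / t) := by
        rw [two_smul, integral_Ioi_div_sq_smul_comp_sub_div_of_even hf_even hc]
    _ = ∫ t in Ioi (0 : ℝ), (1 + c / t ^ 2) • f (t - c / t) := by
        simp only [add_smul, one_smul]
        exact (integral_add (integrableOn_Ioi_comp_sub_div hf hc)
          (integrableOn_Ioi_div_sq_smul_comp_sub_div hf hc)).symm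
    _ = ∫ u, f u := integral_Ioi_one_add_div_sq_smul_comp_sub_div f hc

end CauchySchlomilch

lemma exp_neg_sq_sub_sq_div_sq (x : ℝ) {t : ℝ} (ht : t ≠ 0) :
    exp (-t ^ 2 - x ^ 2 / t ^ 2) = exp (-2 * x) * exp (-1 * (t - x / t) ^ 2) := by
  rw [← exp_add]
  congr 1
  field_simp
  ring

theorem stmt_1 (x : ℝ) (hx : 0 < x) :
    IntegrableOn (fun t : ℝ => t⁻¹ ^ 2 * Real.exp (-t ^ 2 - x ^ 2 / t ^ 2)) (Ioi 0) ∧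
    x * ∫ t in Ioi (0 : ℝ), t⁻¹ ^ 2 * Real.exp (-t ^ 2 - x ^ 2 / t ^ 2)
      = (Real.sqrt Real.pi / 2) * Real.exp (-2 * x) := by
  let gaussian : ℝ → ℝ := fun u => exp (-1 * u ^ 2)
  have gaussian_integrable : Integrable gaussian := integrable_exp_neg_mul_sq one_pos
  have gaussian_even : gaussian.Even := fun u => by simp only [gaussian, neg_sq]
  have integrand_eq : EqOn (fun t => t⁻¹ ^ 2 * exp (-t ^ 2 - x ^ 2 / t ^ 2))
      (fun t => exp (-2 * x) / x * ((x / t ^ 2) • gaussian (t - x / t))) (Ioi 0) := by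
    intro t (ht : 0 < t)
    simp only [gaussian, exp_neg_sq_sub_sq_div_sq x ht.ne', smul_eq_mul]
    field_simp
  have half_gaussian :
      2 * ∫ t in Ioi (0 : ℝ), (x / t ^ 2) • gaussian (t - x / t) = √π := by
    rw [← smul_eq_mul, two_smul_integral_Ioi_div_sq_smul_comp_sub_div_of_even gaussian_integrable
      gaussian_even hx, integral_gaussian, div_one]
  constructor
  · rw [integrableOn_congr_fun integrand_eq measurableSet_Ioi]
    exact (integrableOn_Ioi_div_sq_smul_comp_sub_div gaussian_integrable hx).const_mul _
  · rw [setIntegral_congr_fun measurableSet_Ioi integrand_eq, integral_const_mul, ← half_gaussian]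
    field_simp
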